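/- Let G be a connected labeled semi-Hamiltonian graph on vertex set [n] (i.e., L_n ⊆ G and {1,n} ∉ E(G)). Then the Hankel edge ideal I_G is a radical ideal if and only if G = K_n − e where e = {1,n}. -/

import Mathlib

open MvPolynomial

/-- The Hankel binomial `g_{ij} = x_i x_{j+1} - x_j x_{i+1}` (0-indexed vertices). -/
noncomputable def hg (n : ℕ) (K : Type*) [Field K] (i j : Fin n) :
    MvPolynomial (Fin (n + 1)) K :=
  X i.castSucc * X j.succ - X j.castSucc * X i.succ

/-- The generating set of the Hankel edge ideal of a graph `G` on `[n]`. -/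
noncomputable def hgenSet (n : ℕ) (K : Type*) [Field K] (G : SimpleGraph (Fin n)) :
    Set (MvPolynomial (Fin (n + 1)) K) :=
  { f | ∃ i j : Fin n, i < j ∧ G.Adj i j ∧ f = hg n K i j }

/-- The Hankel edge ideal `I_G`. -/
noncomputable def hankelIdeal (n : ℕ) (K : Type*) [Field K] (G : SimpleGraph (Fin n)) :
    Ideal (MvPolynomial (Fin (n + 1)) K) :=
  Ideal.span (hgenSet n K G)

/-- `I_X`, the ideal of 2-minors of the 2×n Hankel matrix, i.e. `I_{K_n}`. -/
noncomputable def IX (n : ℕ) (K : Type*) [Field K] :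
    Ideal (MvPolynomial (Fin (n + 1)) K) :=
  hankelIdeal n K ⊤

/-- The height of an ideal: the infimum of the heights of primes containing it. -/
noncomputable def ht {R : Type*} [CommRing R] (I : Ideal R) : ℕ∞ :=
  ⨅ (p : PrimeSpectrum R) (_ : I ≤ p.asIdeal), Order.height p

/-- The minimal number of generators of an ideal. -/
noncomputable def mu {R : Type*} [CommRing R] (I : Ideal R) : ℕ∞ :=
  ⨅ (s : Finset R) (_ : Ideal.span (s : Set R) = I), (s.card : ℕ∞)

/-- The arithmetical rank of an ideal. -/
noncomputable def ara {R : Type*} [CommRing R] (I : Ideal R) : ℕ∞ :=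
  ⨅ (s : Finset R) (_ : (Ideal.span (s : Set R)).radical = I.radical), (s.card : ℕ∞)

/-- The labeled path `L_n` with edges `{i, i+1}` (0-indexed). -/
def pathG (n : ℕ) : SimpleGraph (Fin n) :=
  SimpleGraph.fromRel (fun i j => (i : ℕ) + 1 = (j : ℕ))

/-- The labeled cycle `C_n` with edges `{i, i+1}` and `{0, n-1}` (0-indexed). -/
def cycleG (n : ℕ) : SimpleGraph (Fin n) :=
  SimpleGraph.fromRel (fun i j =>
    (i : ℕ) + 1 = (j : ℕ) ∨ ((i : ℕ) = 0 ∧ (j : ℕ) = n - 1))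

/-- The monomial prime ideal generated by the variables with index in `[lo, hi]` (0-indexed). -/
noncomputable def Pvars (n : ℕ) (K : Type*) [Field K] (lo hi : ℕ) :
    Ideal (MvPolynomial (Fin (n + 1)) K) :=
  Ideal.span { f | ∃ i : Fin (n + 1), lo ≤ (i : ℕ) ∧ (i : ℕ) ≤ hi ∧ f = X i }

/-- The complete graph on `[n]` minus the edge `{1, n}` (0-indexed: `{0, n-1}`). -/
def KnMinusE (n : ℕ) : SimpleGraph (Fin n) :=
  (⊤ : SimpleGraph (Fin n)) \
    SimpleGraph.fromRel (fun i j => (i : ℕ) = 0 ∧ (j : ℕ) = n - 1)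

/-- Variables indexed by natural numbers. -/
noncomputable def hV (n : ℕ) (K : Type*) [Field K] (k : ℕ) : MvPolynomial (Fin (n + 1)) K :=
  if h : k < n + 1 then X ⟨k, h⟩ else 0

lemma hV_fin (n : ℕ) (K : Type*) [Field K] (k : Fin (n + 1)) : hV n K (k : ℕ) = X k := by
  rw [hV, dif_pos k.2]

lemma hg_eq (n : ℕ) (K : Type*) [Field K] (i j : Fin n) :
    hg n K i j = hV n K i * hV n K (j + 1) - hV n K j * hV n K (i + 1) := by
  have h1 := hV_fin n K i.castSucc
  have h2 := hV_fin n K j.castSucc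
  have h3 := hV_fin n K i.succ
  have h4 := hV_fin n K j.succ
  simp only [Fin.val_castSucc, Fin.val_succ] at h1 h2 h3 h4
  rw [h1, h2, h3, h4, hg]

lemma dom_rel {D : Type*} [CommRing D] [IsDomain D] (n : ℕ) (z : ℕ → D)
    (hz : ∀ i, i + 2 ≤ n → z i * z (i + 2) = z (i + 1) * z (i + 1)) (i j : ℕ) (hij : i < j)
    (hj : j < n) (hne : ¬ (i = 0 ∧ j = n - 1)) : z i * z (j + 1) = z j * z (i + 1) := by
  by_cases h1 : z 1 = 0
  · have hall : ∀ k, k + 1 < n → z (k + 1) = 0 := by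
      intro k
      induction k with
      | zero => intro _; exact h1
      | succ k ih =>
        intro hk
        have h := hz (k + 1) (by omega)
        rw [ih (by omega), zero_mul] at h
        exact mul_self_eq_zero.mp h.symm
    have hzj : z j = 0 := by
      obtain ⟨k, rfl⟩ : ∃ k, j = k + 1 := ⟨j - 1, by omega⟩
      exact hall k hj
    rw [hzj, zero_mul]
    by_cases hi : i = 0
    · rw [hall j (by omega), mul_zero]
    · obtain ⟨k, rfl⟩ : ∃ k, i = k + 1 := ⟨i - 1, by omega⟩
      rw [hall k (by omega), zero_mul]
  · have hall : ∀ k, k + 1 < n → z k ≠ 0 ∧ z (k + 1) ≠ 0 := by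
      intro k
      induction k with
      | zero =>
        intro hk
        refine ⟨fun h => ?_, h1⟩
        have h' := hz 0 (by omega)
        rw [h, zero_mul] at h'
        exact h1 (mul_self_eq_zero.mp h'.symm)
      | succ k ih =>
        intro hk
        obtain ⟨ha, hb⟩ := ih (by omega)
        refine ⟨hb, fun h => ?_⟩
        have h' := hz k (by omega)
        rw [h, mul_zero] at h'
        exact hb (mul_self_eq_zero.mp h'.symm)
    have key : ∀ t, i + t < n → z i * z (i + t + 1) = z (i + t) * z (i + 1) := by
      intro t
      induction t with
      | zero => intro _; rfl
      | succ t ih =>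
        intro ht
        have h := ih (by omega)
        have h2 := hz (i + t) (by omega)
        have h3 := (hall (i + t) (by omega)).1
        apply mul_left_cancel₀ h3
        have e1 : i + (t + 1) + 1 = i + t + 2 := by ring
        have e2 : i + (t + 1) = i + t + 1 := by ring
        rw [e1, e2]
        linear_combination (z i) * h2 + z (i + t + 1) * h
    have := key (j - i) (by omega)
    rwa [show i + (j - i) = j by omega] at this

lemma mem_of_radical (n : ℕ) (K : Type*) [Field K] (G : SimpleGraph (Fin n))
    (hpath : pathG n ≤ G) (hr : (hankelIdeal n K G).IsRadical) (i j : Fin n) (hij : i < j)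
    (hne : ¬ ((i : ℕ) = 0 ∧ (j : ℕ) = n - 1)) : hg n K i j ∈ hankelIdeal n K G := by
  rw [← hr.radical, Ideal.radical_eq_sInf, Ideal.mem_sInf]
  rintro p ⟨hp, hprime⟩
  have := dom_rel n (fun k => Ideal.Quotient.mk p (hV n K k)) (by
    intro k hk
    have hmem : hg n K ⟨k, by omega⟩ ⟨k + 1, by omega⟩ ∈ p := by
      apply hp
      apply Ideal.subset_span
      refine ⟨_, _, ?_, ?_, rfl⟩
      · simp [Fin.lt_def]
      · apply hpath
        simp [pathG, SimpleGraph.fromRel_adj]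
    rw [hg_eq] at hmem
    have h := Ideal.Quotient.eq_zero_iff_mem.mpr hmem
    simp only [map_sub, map_mul] at h
    exact sub_eq_zero.mp h) i j hij j.2 hne
  rw [← Ideal.Quotient.eq_zero_iff_mem, hg_eq]
  simp only [map_sub, map_mul]
  exact sub_eq_zero.mpr this

lemma coeff_hom_mul {σ K : Type*} [Field K] (h g : MvPolynomial σ K) (hg : g.IsHomogeneous 2)
    (d : σ →₀ ℕ) (hd : d.degree = 2) : coeff d (h * g) = coeff 0 h * coeff d g := by
  classical
  rw [coeff_mul, Finset.sum_eq_single (0, d)]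
  · rintro ⟨u, v⟩ huv hne
    rw [Finset.HasAntidiagonal.mem_antidiagonal] at huv
    simp only at huv ⊢
    rw [hg.coeff_eq_zero, mul_zero]
    intro hv
    apply hne
    have h1 : u.degree + v.degree = 2 := by rw [← map_add, huv, hd]
    have h2 : u = 0 := by
      rw [← Finsupp.degree_eq_zero_iff]; omega
    subst h2
    simp at huv
    rw [huv]
  · intro h
    exact absurd (by simp) h

open Classical in
lemma adj_of_mem (n : ℕ) (K : Type*) [Field K] (G : SimpleGraph (Fin n)) (i j : Fin n)
    (hij : i < j) (hmem : hg n K i j ∈ hankelIdeal n K G) : G.Adj i j := by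
  by_contra hnadj
  let e : Fin (n + 1) → Fin (n + 1) → (Fin (n + 1) →₀ ℕ) :=
    fun a b => Finsupp.single a 1 + Finsupp.single b 1
  let D : Finset (Fin (n + 1) →₀ ℕ) :=
    ((Finset.univ : Finset (Fin (n + 1) × Fin (n + 1))).filter
      (fun p => (p.1 : ℕ) + p.2 = i + j + 1 ∧ (p.1 : ℕ) ≤ i)).image (fun p => e p.1 p.2)
  have hD : ∀ p q : Fin (n + 1), p ≤ q → (e p q ∈ D ↔ (p : ℕ) + q = i + j + 1 ∧ (p : ℕ) ≤ i) := by
    intro p q hpq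
    simp only [D, Finset.mem_image, Finset.mem_filter, Finset.mem_univ, true_and, Prod.exists]
    constructor
    · rintro ⟨a, b, ⟨h1, h2⟩, h3⟩
      simp only [e] at h3
      rw [Finsupp.single_add_single_eq_single_add_single one_ne_zero one_ne_zero] at h3
      have hij' : (i : ℕ) < j := hij
      have hpq' : (p : ℕ) ≤ q := hpq
      rcases h3 with ⟨rfl, rfl⟩ | ⟨_, rfl, rfl⟩ | ⟨h, _⟩
      · exact ⟨h1, h2⟩
      · omega
      · omega
    · intro h
      exact ⟨p, q, h, rfl⟩
  have hDdeg : ∀ d ∈ D, d.degree = 2 := by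
    intro d hd
    simp only [D, Finset.mem_image] at hd
    obtain ⟨p, _, rfl⟩ := hd
    simp [e]
  have hXX : ∀ p q : Fin (n + 1), ∑ d ∈ D, coeff d (X p * X q : MvPolynomial (Fin (n + 1)) K) =
      if e p q ∈ D then 1 else 0 := by
    intro p q
    have : (X p * X q : MvPolynomial (Fin (n + 1)) K) = monomial (e p q) 1 := by
      simp [e, X, monomial_mul]
    rw [this]
    simp [coeff_monomial]
  have hgv : ∀ a b : Fin n, a < b → ∑ d ∈ D, coeff d (hg n K a b) =
      if a = i ∧ b = j then 1 else 0 := by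
    intro a b hab
    have hab' : (a : ℕ) < b := hab
    have hij' : (i : ℕ) < j := hij
    simp only [hg, coeff_sub, Finset.sum_sub_distrib]
    rw [mul_comm (X b.castSucc), hXX, hXX]
    have h1 := hD a.castSucc b.succ (by simp [Fin.le_def]; omega)
    have h2 := hD a.succ b.castSucc (by simp [Fin.le_def]; omega)
    simp only [Fin.val_castSucc, Fin.val_succ] at h1 h2
    simp only [h1, h2, Fin.ext_iff]
    split_ifs <;> first | omega | simp
  have hzero : ∀ f ∈ hankelIdeal n K G, ∑ d ∈ D, coeff d f = 0 := by
    intro f hf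
    refine Submodule.span_induction (p := fun f _ => ∀ h : MvPolynomial (Fin (n + 1)) K,
      ∑ d ∈ D, coeff d (h * f) = 0) ?_ ?_ ?_ ?_ hf |> fun h => by simpa using h 1
    · rintro _ ⟨a, b, hab, hadj, rfl⟩ h
      have hom : (hg n K a b).IsHomogeneous 2 :=
        ((isHomogeneous_X K _).mul (isHomogeneous_X K _)).sub
          ((isHomogeneous_X K _).mul (isHomogeneous_X K _))
      rw [Finset.sum_congr rfl (fun d hd => coeff_hom_mul h _ hom d (hDdeg d hd)),
        ← Finset.mul_sum, hgv a b hab, if_neg, mul_zero]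
      rintro ⟨rfl, rfl⟩
      exact hnadj hadj
    · simp
    · intro x y _ _ hx hy h
      simp only [mul_add, coeff_add, Finset.sum_add_distrib, hx h, hy h, add_zero]
    · intro a x _ hx h
      rw [smul_eq_mul, ← mul_assoc]
      exact hx _
  have := hzero _ hmem
  rw [hgv i j hij] at this
  simp at this

/-- Normal forms. -/
def hN {R : Type*} [CommRing R] (n : ℕ) (y : ℕ → R) : ℕ → ℕ → R
  | 0, _ => 1
  | d + 1, w => if w ≤ n then y w * y 0 ^ d else y n * hN n y d (w - n)

lemma rel_low {R : Type*} [CommRing R] (n : ℕ) (y : ℕ → R)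
    (hy : ∀ i j, i < n → j < n → y i * y (j + 1) = y j * y (i + 1)) (k : ℕ) :
    ∀ w, k + w ≤ n → y k * y w = y (w + k) * y 0 := by
  induction k with
  | zero => intro w _; simp [mul_comm]
  | succ k ih =>
    intro w hw
    rw [show w + (k + 1) = (w + 1) + k by ring, ← ih (w + 1) (by omega), mul_comm]
    exact (hy k w (by omega) (by omega)).symm

lemma rel_high {R : Type*} [CommRing R] (n : ℕ) (y : ℕ → R)
    (hy : ∀ i j, i < n → j < n → y i * y (j + 1) = y j * y (i + 1)) (t : ℕ) :
    ∀ k w, k + t = n → w ≤ n → n ≤ w + k → y k * y w = y n * y (w + k - n) := by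
  induction t with
  | zero =>
    intro k w hk hw h
    have : k = n := by omega
    subst this
    simp
  | succ t ih =>
    intro k w hk hw h
    obtain ⟨v, rfl⟩ : ∃ v, w = v + 1 := ⟨w - 1, by omega⟩
    rw [hy k v (by omega) (by omega), mul_comm, ih (k + 1) v (by omega) (by omega) (by omega)]
    congr 2
    omega

lemma hN_mul {R : Type*} [CommRing R] (n : ℕ) (y : ℕ → R)
    (hy : ∀ i j, i < n → j < n → y i * y (j + 1) = y j * y (i + 1)) (d : ℕ) :
    ∀ w k, w ≤ n * d → k ≤ n → y k * hN n y d w = hN n y (d + 1) (w + k) := by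
  induction d with
  | zero =>
    intro w k hw hk
    have : w = 0 := by simpa using hw
    subst this
    simp [hN, hk]
  | succ d ih =>
    intro w k hw hk
    by_cases h : w ≤ n
    · rw [hN, if_pos h]
      by_cases h2 : w + k ≤ n
      · rw [hN, if_pos h2, ← mul_assoc, rel_low n y hy k w (by omega)]
        ring
      · rw [hN, if_neg h2, hN, if_pos (by omega), ← mul_assoc,
          rel_high n y hy (n - k) k w (by omega) h (by omega)]
        ring
    · rw [hN, if_neg h, hN, if_neg (by omega), mul_left_comm, ih (w - n) k _ hk,
        show w - n + k = w + k - n by omega]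
      rw [mul_add] at hw
      omega

/-- The parametrization of the rational normal scroll cone. -/
noncomputable def hTheta (n : ℕ) (K : Type*) [Field K] :
    MvPolynomial (Fin (n + 1)) K →ₐ[K] MvPolynomial (Fin 2) K :=
  aeval (fun k => X 0 * X 1 ^ (k : ℕ))

lemma ker_theta (n : ℕ) (K : Type*) [Field K] (f : MvPolynomial (Fin (n + 1)) K)
    (hf : hTheta n K f = 0) : f ∈ IX n K := by
  set y : ℕ → MvPolynomial (Fin (n + 1)) K ⧸ IX n K :=
    fun k => Ideal.Quotient.mk _ (hV n K k) with hydef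
  have hy0 : ∀ i j, i < j → j < n → y i * y (j + 1) = y j * y (i + 1) := by
    intro i j hij hj
    have hmem : hg n K ⟨i, by omega⟩ ⟨j, hj⟩ ∈ IX n K := by
      apply Ideal.subset_span
      refine ⟨_, _, ?_, ?_, rfl⟩
      · simpa [Fin.lt_def] using hij
      · simp; omega
    rw [hg_eq] at hmem
    have h := Ideal.Quotient.eq_zero_iff_mem.mpr hmem
    simp only [map_sub, map_mul] at h
    exact sub_eq_zero.mp h
  have hy : ∀ i j, i < n → j < n → y i * y (j + 1) = y j * y (i + 1) := by
    intro i j hi hj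
    rcases lt_trichotomy i j with h | rfl | h
    · exact hy0 i j h hj
    · rfl
    · exact (hy0 j i h hi).symm
  let ρ : MvPolynomial (Fin 2) K →ₗ[K] (MvPolynomial (Fin (n + 1)) K ⧸ IX n K) :=
    (basisMonomials (Fin 2) K).constr K (fun e => hN n y (e 0) (e 1))
  have hρ : ∀ d w : ℕ, ρ (X 0 ^ d * X 1 ^ w) = hN n y d w := by
    intro d w
    have : (X 0 ^ d * X 1 ^ w : MvPolynomial (Fin 2) K) =
        basisMonomials (Fin 2) K (Finsupp.single 0 d + Finsupp.single 1 w) := by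
      simp [X_pow_eq_monomial, monomial_mul]
    rw [this, Module.Basis.constr_basis]
    simp
  have hmon : ∀ (m : Fin (n + 1) →₀ ℕ) (a : K), ∃ a' : K, ∃ d w, w ≤ n * d ∧
      hTheta n K (monomial m a) = a' • (X 0 ^ d * X 1 ^ w) ∧
      Ideal.Quotient.mk (IX n K) (monomial m a) = a' • hN n y d w := by
    refine induction_on_monomial (motive := fun p => ∃ a : K, ∃ d w, w ≤ n * d ∧
      hTheta n K p = a • (X 0 ^ d * X 1 ^ w) ∧
      Ideal.Quotient.mk (IX n K) p = a • hN n y d w) ?_ ?_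
    · intro a
      refine ⟨a, 0, 0, by simp, ?_, ?_⟩
      · simp [hTheta, Algebra.smul_def]
      · have : (C a : MvPolynomial (Fin (n + 1)) K) = a • 1 := by
          rw [smul_eq_C_mul, mul_one]
        simp only [hN]
        rw [this]
        rfl
    · rintro p k ⟨a, d, w, hw, h1, h2⟩
      have hk : (k : ℕ) ≤ n := Nat.lt_succ_iff.mp k.2
      refine ⟨a, d + 1, w + k, ?_, ?_, ?_⟩
      · rw [mul_add]; omega
      · rw [map_mul, h1, hTheta, aeval_X, smul_mul_assoc]
        congr 1
        ring
      · rw [map_mul, h2, ← hN_mul n y hy d w k hw hk, smul_mul_assoc, mul_comm (y k), hydef]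
        simp only [hV_fin]
  have hmk : ∀ f, Ideal.Quotient.mk (IX n K) f = ρ (hTheta n K f) := by
    intro f
    refine induction_on' f ?_ ?_
    · intro m a
      obtain ⟨a', d, w, _, h1, h2⟩ := hmon m a
      rw [h1, h2, map_smul, hρ]
    · intro p q hp hq
      simp only [map_add, hp, hq]
  rw [← Ideal.Quotient.eq_zero_iff_mem, hmk, hf, map_zero]

/-- The projection killing the variables `x_1, ..., x_{n-1}`. -/
noncomputable def hPi (n : ℕ) (K : Type*) [Field K] :
    MvPolynomial (Fin (n + 1)) K →ₐ[K] MvPolynomial (Fin (n + 1)) K :=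
  aeval (fun k => if (k : ℕ) = 0 ∨ (k : ℕ) = n then X k else 0)

lemma hPi_V_mid (n : ℕ) (K : Type*) [Field K] (k : ℕ) (h0 : 0 < k) (hk : k < n) :
    hPi n K (hV n K k) = 0 := by
  rw [hV, dif_pos (by omega), hPi, aeval_X, if_neg]
  simp; omega

lemma hPi_V_end (n : ℕ) (K : Type*) [Field K] (k : ℕ) (h0 : k = 0 ∨ k = n) :
    hPi n K (hV n K k) ≠ 0 := by
  rw [hV, dif_pos (by omega), hPi, aeval_X, if_pos (by simpa using h0)]
  exact X_ne_zero _

lemma KnMinusE_adj (n : ℕ) (i j : Fin n) (hij : i < j) :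
    (KnMinusE n).Adj i j ↔ ¬ ((i : ℕ) = 0 ∧ (j : ℕ) = n - 1) := by
  have h : (i : ℕ) < j := hij
  simp only [KnMinusE, SimpleGraph.sdiff_adj, SimpleGraph.top_adj, SimpleGraph.fromRel_adj, ne_eq,
    Fin.ext_iff]
  omega

lemma g_mem (n : ℕ) (K : Type*) [Field K] (i j : ℕ) (hi : i < n) (hj : j < n)
    (h1 : ¬ (i = 0 ∧ j = n - 1)) (h2 : ¬ (j = 0 ∧ i = n - 1)) :
    hV n K i * hV n K (j + 1) - hV n K j * hV n K (i + 1) ∈ hankelIdeal n K (KnMinusE n) := by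
  have key : ∀ i j (hi : i < n) (hj : j < n), i < j → ¬ (i = 0 ∧ j = n - 1) →
      hV n K i * hV n K (j + 1) - hV n K j * hV n K (i + 1) ∈ hankelIdeal n K (KnMinusE n) := by
    intro i j hi hj hij h
    have := hg_eq n K ⟨i, hi⟩ ⟨j, hj⟩
    simp only at this
    rw [← this]
    apply Ideal.subset_span
    exact ⟨_, _, hij, (KnMinusE_adj n _ _ hij).mpr h, rfl⟩
  rcases lt_trichotomy i j with h | rfl | h
  · exact key i j hi hj h h1
  · simp
  · rw [← neg_mem_iff, neg_sub]
    exact key j i hj hi h h2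

lemma mid_mul_mem (n : ℕ) (K : Type*) [Field K] (hn : 3 ≤ n) (c : ℕ) (h0 : 0 < c) (hc : c < n) :
    hV n K c * (hV n K 0 * hV n K n - hV n K (n - 1) * hV n K 1) ∈
      hankelIdeal n K (KnMinusE n) := by
  obtain ⟨m, rfl⟩ : ∃ m, n = m + 1 := ⟨n - 1, by omega⟩
  simp only [Nat.add_sub_cancel]
  by_cases h : c < m
  · have e1 := g_mem (m + 1) K c m (by omega) (by omega) (by omega) (by omega)
    have e2 := g_mem (m + 1) K 0 c (by omega) (by omega) (by omega) (by omega)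
    have := add_mem (Ideal.mul_mem_left _ (hV (m + 1) K 0) e1)
      (Ideal.mul_mem_left _ (hV (m + 1) K m) e2)
    convert this using 1
    ring
  · obtain ⟨b, rfl⟩ : ∃ b, c = b + 1 := ⟨c - 1, by omega⟩
    have e1 := g_mem (m + 1) K 0 b (by omega) (by omega) (by omega) (by omega)
    have e2 := g_mem (m + 1) K b m (by omega) (by omega) (by omega) (by omega)
    have := add_mem (Ideal.mul_mem_left _ (hV (m + 1) K (m + 1)) e1)
      (Ideal.mul_mem_left _ (hV (m + 1) K 1) e2)
    convert this using 1
    ring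

lemma sub_pi_mul_mem (n : ℕ) (K : Type*) [Field K] (hn : 3 ≤ n)
    (a : MvPolynomial (Fin (n + 1)) K) :
    (a - hPi n K a) * (hV n K 0 * hV n K n - hV n K (n - 1) * hV n K 1) ∈
      hankelIdeal n K (KnMinusE n) := by
  induction a using MvPolynomial.induction_on with
  | C a => simp [hPi]
  | add p q hp hq =>
    convert add_mem hp hq using 1
    rw [map_add]
    ring
  | mul_X p k hp =>
    by_cases hk : (k : ℕ) = 0 ∨ (k : ℕ) = n
    · have : hPi n K (X k) = X k := by rw [hPi, aeval_X, if_pos hk]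
      rw [map_mul, this]
      convert Ideal.mul_mem_left _ (X k) hp using 1
      ring
    · have : hPi n K (X k) = 0 := by rw [hPi, aeval_X, if_neg hk]
      rw [map_mul, this, mul_zero, sub_zero, mul_assoc, ← hV_fin]
      exact Ideal.mul_mem_left _ _ (mid_mul_mem n K hn k (by omega) (by omega))

lemma KnMinusE_isRadical (n : ℕ) (K : Type*) [Field K] (hn : 3 ≤ n) :
    (hankelIdeal n K (KnMinusE n)).IsRadical := by
  have hθ : ∀ f ∈ hankelIdeal n K (KnMinusE n), hTheta n K f = 0 := by
    intro f hf
    have : hankelIdeal n K (KnMinusE n) ≤ RingHom.ker (hTheta n K) := by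
      refine Ideal.span_le.mpr ?_
      rintro _ ⟨i, j, _, _, rfl⟩
      simp only [SetLike.mem_coe, RingHom.mem_ker, hg, hTheta, map_sub, map_mul, aeval_X,
        Fin.val_castSucc, Fin.val_succ]
      ring
    exact this hf
  have hπ : ∀ f ∈ hankelIdeal n K (KnMinusE n), hPi n K f = 0 := by
    intro f hf
    have : hankelIdeal n K (KnMinusE n) ≤ RingHom.ker (hPi n K) := by
      refine Ideal.span_le.mpr ?_
      rintro _ ⟨i, j, hij, hadj, rfl⟩
      rw [KnMinusE_adj n i j hij] at hadj
      have hij' : (i : ℕ) < j := hij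
      rw [SetLike.mem_coe, RingHom.mem_ker, hg_eq, map_sub, map_mul, map_mul,
        hPi_V_mid n K j (by omega) j.2, zero_mul, sub_zero]
      by_cases hi : (i : ℕ) = 0
      · rw [hPi_V_mid n K (j + 1) (by omega) (by omega), mul_zero]
      · rw [hPi_V_mid n K i (by omega) i.2, zero_mul]
    exact this hf
  rintro f ⟨r, hr⟩
  have h1 : hTheta n K f = 0 := by
    have := hθ _ hr
    rw [map_pow] at this
    exact eq_zero_of_pow_eq_zero this
  have h2 : hPi n K f = 0 := by
    have := hπ _ hr
    rw [map_pow] at this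
    exact eq_zero_of_pow_eq_zero this
  have h3 := ker_theta n K f h1
  have h4 : IX n K ≤ hankelIdeal n K (KnMinusE n) ⊔
      Ideal.span {hV n K 0 * hV n K n - hV n K (n - 1) * hV n K 1} := by
    refine Ideal.span_le.mpr ?_
    rintro _ ⟨i, j, hij, -, rfl⟩
    by_cases h : (i : ℕ) = 0 ∧ (j : ℕ) = n - 1
    · apply Ideal.mem_sup_right
      apply Ideal.subset_span
      rw [hg_eq, h.1, h.2, Nat.sub_add_cancel (by omega)]
      simp
    · apply Ideal.mem_sup_left
      exact Ideal.subset_span ⟨i, j, hij, (KnMinusE_adj n _ _ hij).mpr h, rfl⟩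
  obtain ⟨u, hu, v, hv, rfl⟩ := Submodule.mem_sup.mp (h4 h3)
  obtain ⟨a, rfl⟩ := Ideal.mem_span_singleton'.mp hv
  refine add_mem hu ?_
  have ha : hPi n K a = 0 := by
    rw [map_add, hπ u hu, zero_add, map_mul, map_sub, map_mul, map_mul,
      hPi_V_mid n K 1 (by omega) (by omega), mul_zero, sub_zero] at h2
    rcases mul_eq_zero.mp h2 with h | h
    · exact h
    · exact absurd h (mul_ne_zero (hPi_V_end n K 0 (Or.inl rfl)) (hPi_V_end n K n (Or.inr rfl)))
  have := sub_pi_mul_mem n K hn a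
  rwa [ha, sub_zero] at this

/-- For a connected labeled semi-Hamiltonian graph `G` on `[n]`, the ideal
`I_G` is radical iff `G = K_n − e` with `e = {1, n}`. -/
theorem stmt_6 (n : ℕ) (K : Type*) [Field K] (hn : 2 ≤ n)
    (G : SimpleGraph (Fin n)) (hG : G.Connected) (hpath : pathG n ≤ G)
    (hne : ¬ G.Adj ⟨0, by omega⟩ ⟨n - 1, by omega⟩) :
    (hankelIdeal n K G).IsRadical ↔ G = KnMinusE n := by
  have hn3 : 3 ≤ n := by
    by_contra h
    have : n = 2 := by omega
    subst this
    apply hne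
    apply hpath
    simp [pathG, SimpleGraph.fromRel_adj]
  constructor
  · intro hr
    have key : ∀ i j : Fin n, i < j → (G.Adj i j ↔ (KnMinusE n).Adj i j) := by
      intro i j hij
      rw [KnMinusE_adj n i j hij]
      constructor
      · rintro hadj ⟨h1, h2⟩
        apply hne
        convert hadj using 1
        · exact Fin.ext h1.symm
        · exact Fin.ext h2.symm
      · intro h
        exact adj_of_mem n K G i j hij (mem_of_radical n K G hpath hr i j hij h)
    ext i j
    rcases lt_trichotomy i j with h | rfl | h
    · exact key i j h
    · simp
    · rw [G.adj_comm, (KnMinusE n).adj_comm]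
      exact key j i h
  · rintro rfl
    exact KnMinusE_isRadical n K hn3
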